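/- arXiv:2501.18035 — 8 statements merged into one kernel-verified Lean document; each statement's English description precedes it below -/
import Mathlib

section
/- Let R₀ ∈ ℂ^{m×n} be in GB(s) form, let s + t ≤ n and b ≤ t, and let C ⊆ {s+1, …, s+t} be a set of b 'candidate' column indices. Let Π̂ ∈ ℂ^{n×n} be a permutation matrix whose underlying permutation fixes every index j with j ≤ s or j > s+t and maps the indices in C bijectively onto {s+1, …, s+b}. Let U ∈ ℂ^{(m−s)×(m−s)} be unitary and set Q̂ = blkdiag(I_s, U) ∈ ℂ^{m×m}, and R₁ = Q̂* R₀ Π̂. Suppose that for some 1 ≤ c ≤ min{m−s, b} the (m−s)×b submatrix R₁((s+1):m, (s+1):(s+b)) is in GB(c) form, and that |R₁(s+c, s+c)|² ≥ max(δ, μ), where δ := max{ ‖R₀((s+1):m, j)‖₂² : j ∈ {s+1,…,s+t} \ C } (with δ := 0 if C = {s+1,…,s+t}) and μ := max{ ‖R₀(:, j)‖₂² : s+t < j ≤ n } (with μ := 0 if s+t = n). Then R₁ is in GB(s+c) form. -/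
open Matrix

/-- `tailNorm R i j` is the Euclidean norm of the subvector of column `j` of `R`
consisting of the (0-based) rows `i, i+1, …, m-1`, i.e. `‖R((i+1):m, j)‖₂` in 1-based notation. -/
noncomputable def tailNorm {m n : ℕ} (R : Matrix (Fin m) (Fin n) ℂ) (i : ℕ) (j : Fin n) : ℝ :=
  Real.sqrt (∑ p : Fin m, if i ≤ p.val then ‖R p j‖ ^ 2 else 0)

/-- `R` is in `k`-Golub–Businger form: its first `k` columns are upper-triangular, and for each
(1-based) `i ≤ k`, `|R(i,i)|` equals the maximum of `‖R(i:m, j)‖₂` over the columns `j ≥ i`. -/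
def IsGB {m n : ℕ} (k : ℕ) (R : Matrix (Fin m) (Fin n) ℂ) : Prop :=
  (∀ (p : Fin m) (q : Fin n), q.val < k → q.val < p.val → R p q = 0) ∧
  ∀ (i : ℕ), i < k → ∀ (him : i < m) (hin : i < n),
    IsGreatest {x : ℝ | ∃ j : Fin n, i ≤ j.val ∧ x = tailNorm R i j}
      ‖R ⟨i, him⟩ ⟨i, hin⟩‖

/-- `blkdiag hsm U` is the block-diagonal `m×m` matrix with the `s×s` identity in the
upper-left block and `U ∈ ℂ^{(m−s)×(m−s)}` in the lower-right block. -/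
noncomputable def blkdiag {m s : ℕ} (hsm : s ≤ m)
    (U : Matrix (Fin (m - s)) (Fin (m - s)) ℂ) : Matrix (Fin m) (Fin m) ℂ :=
  Matrix.of fun i j =>
    if h : i.val < s ∨ j.val < s then (if i = j then (1 : ℂ) else 0)
    else U ⟨i.val - s, by have := i.isLt; omega⟩ ⟨j.val - s, by have := j.isLt; omega⟩

lemma aux_split {m s : ℕ} (hsm : s ≤ m) {M : Type*} [AddCommMonoid M] (f : Fin m → M) :
    ∑ p : Fin m, f p = ∑ p : Fin s, f ⟨p.val, by have := p.isLt; omega⟩ +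
      ∑ p : Fin (m - s), f ⟨s + p.val, by have := p.isLt; omega⟩ := by
  have key : ∀ (d : ℕ) (hd : m = s + d),
      ∑ p : Fin m, f p = ∑ p : Fin s, f ⟨p.val, by have := p.isLt; omega⟩ +
      ∑ p : Fin d, f ⟨s + p.val, by have := p.isLt; omega⟩ := by
    intro d hd
    subst hd
    rw [Fin.sum_univ_add]
    rfl
  exact key (m - s) (by omega)

lemma aux_unitary {d : ℕ} (U : Matrix (Fin d) (Fin d) ℂ)
    (hU : U ∈ Matrix.unitaryGroup (Fin d) ℂ) (v : Fin d → ℂ) :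
    ∑ p, ‖(Uᴴ *ᵥ v) p‖ ^ 2 = ∑ p, ‖v p‖ ^ 2 := by
  have h1 : ∀ w : Fin d → ℂ, star w ⬝ᵥ w = ((∑ p, ‖w p‖ ^ 2 : ℝ) : ℂ) := by
    intro w
    simp only [dotProduct, Pi.star_apply, RCLike.star_def, Complex.conj_mul']
    push_cast
    rfl
  have h2 : U * Uᴴ = 1 := Matrix.mem_unitaryGroup_iff.mp hU
  have h3 : star (Uᴴ *ᵥ v) ⬝ᵥ (Uᴴ *ᵥ v) = star v ⬝ᵥ v := by
    rw [star_mulVec, conjTranspose_conjTranspose, ← dotProduct_mulVec, mulVec_mulVec, h2,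
      one_mulVec]
  rw [h1, h1] at h3
  exact_mod_cast h3

lemma aux_top {m n s : ℕ} (hsm : s ≤ m) (U : Matrix (Fin (m - s)) (Fin (m - s)) ℂ)
    (R₀ : Matrix (Fin m) (Fin n) ℂ) (σ : Equiv.Perm (Fin n)) (p : Fin m) (hp : p.val < s)
    (q : Fin n) :
    ((blkdiag hsm U)ᴴ * R₀ * σ.permMatrix ℂ) p q = R₀ p (σ.symm q) := by
  rw [Equiv.Perm.permMatrix, PEquiv.mul_toMatrix_toPEquiv, Matrix.submatrix_apply, Matrix.mul_apply,
    Finset.sum_eq_single p]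
  · simp [blkdiag, hp]
  · intro x _ hx
    simp [blkdiag, hp, hx]
  · simp

lemma aux_bot {m n s : ℕ} (hsm : s ≤ m) (U : Matrix (Fin (m - s)) (Fin (m - s)) ℂ)
    (R₀ : Matrix (Fin m) (Fin n) ℂ) (σ : Equiv.Perm (Fin n)) (p : Fin (m - s))
    (q : Fin n) :
    ((blkdiag hsm U)ᴴ * R₀ * σ.permMatrix ℂ) ⟨s + p.val, by have := p.isLt; omega⟩ q =
      (Uᴴ *ᵥ fun x : Fin (m - s) => R₀ ⟨s + x.val, by have := x.isLt; omega⟩ (σ.symm q)) p := by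
  rw [Equiv.Perm.permMatrix, PEquiv.mul_toMatrix_toPEquiv, Matrix.submatrix_apply, Matrix.mul_apply,
    aux_split hsm, Finset.sum_eq_zero, zero_add]
  · simp [blkdiag, mulVec, dotProduct]
  · intro x _
    have : x.val ≠ s + p.val := by have := x.isLt; omega
    simp [blkdiag, this]

lemma aux_tail {m n s : ℕ} (hsm : s ≤ m) (U : Matrix (Fin (m - s)) (Fin (m - s)) ℂ)
    (hU : U ∈ Matrix.unitaryGroup (Fin (m - s)) ℂ)
    (R₀ : Matrix (Fin m) (Fin n) ℂ) (σ : Equiv.Perm (Fin n)) (i : ℕ) (hi : i ≤ s)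
    (q : Fin n) :
    tailNorm ((blkdiag hsm U)ᴴ * R₀ * σ.permMatrix ℂ) i q = tailNorm R₀ i (σ.symm q) := by
  unfold tailNorm
  congr 1
  rw [aux_split hsm, aux_split hsm (fun p => if i ≤ p.val then ‖R₀ p (σ.symm q)‖ ^ 2 else 0)]
  congr 1
  · refine Finset.sum_congr rfl fun p _ => ?_
    rw [aux_top hsm U R₀ σ _ p.isLt]
  · have h : ∀ p : Fin (m - s), i ≤ s + p.val := fun p => by omega
    simp only [h, if_true, aux_bot]
    exact aux_unitary U hU _

lemma aux_mono {m n : ℕ} (R : Matrix (Fin m) (Fin n) ℂ) {i k : ℕ} (h : i ≤ k) (j : Fin n) :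
    tailNorm R k j ≤ tailNorm R i j := by
  unfold tailNorm
  refine Real.sqrt_le_sqrt (Finset.sum_le_sum fun p _ => ?_)
  split_ifs with h1 h2
  · exact le_rfl
  · omega
  · positivity
  · exact le_rfl

lemma aux_entry {m n : ℕ} (R : Matrix (Fin m) (Fin n) ℂ) {i : ℕ} (p : Fin m) (h : i ≤ p.val)
    (j : Fin n) : ‖R p j‖ ≤ tailNorm R i j := by
  unfold tailNorm
  refine Real.le_sqrt_of_sq_le ?_
  have := Finset.single_le_sum (f := fun p : Fin m => if i ≤ p.val then ‖R p j‖ ^ 2 else 0)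
    (fun x _ => by split_ifs <;> positivity) (Finset.mem_univ p)
  simpa [h] using this

lemma aux_sub {m n s b : ℕ} (hsm : s ≤ m) (hb : s + b ≤ n) (R : Matrix (Fin m) (Fin n) ℂ)
    (i : ℕ) (j : Fin b) :
    tailNorm (Matrix.of fun (p : Fin (m - s)) (q : Fin b) =>
        R ⟨s + p.val, by have := p.isLt; omega⟩ ⟨s + q.val, by have := q.isLt; omega⟩) i j =
      tailNorm R (s + i) ⟨s + j.val, by have := j.isLt; omega⟩ := by
  unfold tailNorm
  congr 1
  rw [aux_split hsm (fun p => if s + i ≤ p.val then _ else 0), eq_comm, Finset.sum_eq_zero,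
    zero_add]
  · simp
  · intro x _
    have : ¬ s + i ≤ x.val := by omega
    simp [this]

lemma le_of_sq_le_sq_aux {a b : ℝ} (h : a ^ 2 ≤ b ^ 2) (hb : 0 ≤ b) : a ≤ b :=
  (le_abs_self a).trans (abs_le_of_sq_le_sq h hb)

/-- **commit rule, Lemma 3.1.** Let `R₀ ∈ ℂ^{m×n}` be in GB(s) form, let
`s + t ≤ n`, `b ≤ t`, and let `C` be a set of `b` candidate column indices inside the tracked
range `{s+1,…,s+t}` (0-based: `s ≤ j < s+t`). Let `σ` be a permutation fixing every index outside
the tracked range and mapping `C` bijectively onto `{s+1,…,s+b}` (0-based: `s ≤ j < s+b`), with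
permutation matrix `σ.permMatrix ℂ`. Let `U` be unitary, `Q̂ = blkdiag(I_s, U)`, and
`R₁ = Q̂ᴴ R₀ Π̂`. Suppose for some `1 ≤ c ≤ min{m−s, b}` that the submatrix
`R₁((s+1):m, (s+1):(s+b))` is in GB(c) form and that `|R₁(s+c, s+c)|² ≥ max(δ, μ)`, where
`δ` is the maximal squared residual norm `‖R₀((s+1):m, j)‖₂²` over non-candidate tracked
columns `j`, and `μ` is the maximal squared column norm `‖R₀(:, j)‖₂²` over untracked columns
`j > s+t` (each `0` if the respective set is empty). Then `R₁` is in GB(s+c) form. -/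
theorem commit_rule {m n s t b c : ℕ} (hsm : s ≤ m) (hst : s + t ≤ n) (hbt : b ≤ t)
    (hc1 : 1 ≤ c) (hcm : c ≤ m - s) (hcb : c ≤ b)
    (R₀ : Matrix (Fin m) (Fin n) ℂ) (hGB : IsGB s R₀)
    (C : Finset (Fin n)) (hCcard : C.card = b)
    (hCsub : ∀ j ∈ C, s ≤ j.val ∧ j.val < s + t)
    (σ : Equiv.Perm (Fin n))
    (hfix : ∀ j : Fin n, (j.val < s ∨ s + t ≤ j.val) → σ j = j)
    (hmap : C.image σ = Finset.univ.filter fun j : Fin n => s ≤ j.val ∧ j.val < s + b)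
    (U : Matrix (Fin (m - s)) (Fin (m - s)) ℂ)
    (hU : U ∈ Matrix.unitaryGroup (Fin (m - s)) ℂ)
    (R₁ : Matrix (Fin m) (Fin n) ℂ)
    (hR₁ : R₁ = (blkdiag hsm U)ᴴ * R₀ * σ.permMatrix ℂ)
    (hsub : IsGB c (Matrix.of fun (p : Fin (m - s)) (q : Fin b) =>
        R₁ ⟨s + p.val, by have := p.isLt; omega⟩ ⟨s + q.val, by have := q.isLt; omega⟩))
    (hδ : ∀ j : Fin n, s ≤ j.val → j.val < s + t → j ∉ C →
        (tailNorm R₀ s j) ^ 2 ≤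
          ‖R₁ ⟨s + c - 1, by omega⟩ ⟨s + c - 1, by omega⟩‖ ^ 2)
    (hμ : ∀ j : Fin n, s + t ≤ j.val →
        (tailNorm R₀ 0 j) ^ 2 ≤
          ‖R₁ ⟨s + c - 1, by omega⟩ ⟨s + c - 1, by omega⟩‖ ^ 2) :
    IsGB (s + c) R₁ := by
  have hsymfix : ∀ j : Fin n, (j.val < s ∨ s + t ≤ j.val) → σ.symm j = j := by
    intro j hj
    rw [Equiv.symm_apply_eq, hfix j hj]
  have htail : ∀ i, i ≤ s → ∀ q, tailNorm R₁ i q = tailNorm R₀ i (σ.symm q) := by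
    intro i hi q
    rw [hR₁]
    exact aux_tail hsm U hU R₀ σ i hi q
  have htop : ∀ p : Fin m, p.val < s → ∀ q, R₁ p q = R₀ p (σ.symm q) := by
    intro p hp q
    rw [hR₁]
    exact aux_top hsm U R₀ σ p hp q
  have hge : ∀ j : Fin n, s ≤ j.val → s ≤ (σ.symm j).val := by
    intro j hj
    by_contra hlt
    have h1 := hfix (σ.symm j) (Or.inl (by omega))
    rw [Equiv.apply_symm_apply] at h1
    rw [← h1] at hlt
    exact hlt hj
  have hlt' : ∀ j : Fin n, j.val < s + t → (σ.symm j).val < s + t := by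
    intro j hj
    by_contra hlt
    have h1 := hfix (σ.symm j) (Or.inr (by omega))
    rw [Equiv.apply_symm_apply] at h1
    rw [← h1] at hlt
    exact hlt hj
  obtain ⟨hG1, hG2⟩ := hGB
  obtain ⟨hS1, hS2⟩ := hsub
  refine ⟨?_, ?_⟩
  · intro p q hq hqp
    by_cases hqs : q.val < s
    · by_cases hps : p.val < s
      · rw [htop p hps, hsymfix q (Or.inl hqs)]
        exact hG1 p q hqs hqp
      · have h0 : tailNorm R₁ s q = 0 := by
          rw [htail s le_rfl, hsymfix q (Or.inl hqs)]
          unfold tailNorm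
          rw [Finset.sum_eq_zero, Real.sqrt_zero]
          intro x _
          split_ifs with hx
          · rw [hG1 x q hqs (by omega)]; simp
          · rfl
        have := aux_entry R₁ p (i := s) (by omega) q
        rw [h0] at this
        exact norm_le_zero_iff.mp this
    · have := hS1 ⟨p.val - s, by omega⟩ ⟨q.val - s, by omega⟩ (by simp only; omega)
        (by simp only; omega)
      simp only [Matrix.of_apply] at this
      convert this using 2
      · ext; simp only; omega
      · ext; simp only; omega
  · intro i hi him hin
    by_cases his : i < s
    · have hg := hG2 i his him hin
      rw [htop ⟨i, him⟩ his, hsymfix ⟨i, hin⟩ (Or.inl his)]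
      have hcol : ∀ j : Fin n, i ≤ j.val → i ≤ (σ.symm j).val := by
        intro j hj
        by_cases hjs : j.val < s
        · rw [hsymfix j (Or.inl hjs)]; exact hj
        · have := hge j (by omega); omega
      refine ⟨?_, ?_⟩
      · refine ⟨⟨i, hin⟩, le_rfl, ?_⟩
        rw [htail i his.le, hsymfix _ (Or.inl his)]
        refine le_antisymm (aux_entry R₀ ⟨i, him⟩ le_rfl _) (hg.2 ⟨_, le_rfl, rfl⟩)
      · rintro x ⟨j, hj, rfl⟩
        rw [htail i his.le]
        exact hg.2 ⟨_, hcol j hj, rfl⟩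
    · obtain ⟨k, rfl⟩ : ∃ k, i = s + k := ⟨i - s, by omega⟩
      have hkc : k < c := by omega
      have hg := hS2 k hkc (by omega) (by omega)
      simp only [Matrix.of_apply] at hg
      have hub : ∀ j : Fin n, s + k ≤ j.val → j.val < s + b →
          tailNorm R₁ (s + k) j ≤ ‖R₁ ⟨s + k, him⟩ ⟨s + k, hin⟩‖ := by
        intro j hj1 hj2
        have h1 := hg.2 ⟨⟨j.val - s, by omega⟩, by simp only; omega, rfl⟩
        rw [aux_sub hsm (by omega)] at h1
        have e : (⟨s + (j.val - s), by omega⟩ : Fin n) = j := by ext; simp only; omega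
        simp only [e] at h1
        exact h1
      refine ⟨⟨⟨s + k, hin⟩, le_rfl, ?_⟩, ?_⟩
      · exact le_antisymm (aux_entry R₁ ⟨s + k, him⟩ le_rfl _)
          (hub _ le_rfl (by simp only; omega))
      · rintro x ⟨j, hj, rfl⟩
        by_cases hjb : j.val < s + b
        · exact hub j hj hjb
        · have hlast : ‖R₁ ⟨s + c - 1, by omega⟩ ⟨s + c - 1, by omega⟩‖ ≤
              ‖R₁ ⟨s + k, him⟩ ⟨s + k, hin⟩‖ :=
            (aux_entry R₁ _ (by simp only; omega) _).trans
              (hub _ (by simp only; omega) (by simp only; omega))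
          refine ((aux_mono R₁ (Nat.le_add_right s k) j).trans ?_).trans hlast
          rw [htail s le_rfl]
          by_cases hjt : j.val < s + t
          · refine le_of_sq_le_sq_aux (hδ _ (hge j (by omega)) (hlt' j hjt) ?_) (norm_nonneg _)
            intro hC
            have := Finset.mem_image_of_mem σ hC
            rw [hmap, Equiv.apply_symm_apply] at this
            simp at this
            omega
          · rw [hsymfix j (Or.inr (by omega))]
            exact (aux_mono R₀ (Nat.zero_le s) j).trans
              (le_of_sq_le_sq_aux (hμ j (by omega)) (norm_nonneg _))
end

section
/- Let R₀ ∈ ℂ^{m×n} be in GB(s) form, let U ∈ ℂ^{(m−s)×(m−s)} be unitary, set Q̂ = blkdiag(I_s, U) ∈ ℂ^{m×m}, and let Π ∈ ℂ^{n×n} be a permutation matrix whose underlying permutation fixes every index j with j ≤ s. Then Q̂* R₀ Π is in GB(s) form. -/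
open Matrix

lemma unitary_sum_norm {k : ℕ} (U : Matrix (Fin k) (Fin k) ℂ)
    (hU : U ∈ Matrix.unitaryGroup (Fin k) ℂ) (v : Fin k → ℂ) :
    ∑ b, ‖(Uᴴ *ᵥ v) b‖ ^ 2 = ∑ b, ‖v b‖ ^ 2 := by
  have key : ∀ w : Fin k → ℂ, star w ⬝ᵥ w = ((∑ b, ‖w b‖ ^ 2 : ℝ) : ℂ) := by
    intro w
    simp only [dotProduct, Pi.star_apply, RCLike.star_def]
    push_cast
    exact Finset.sum_congr rfl fun b _ => Complex.conj_mul' (w b)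
  have h2 : star (Uᴴ *ᵥ v) ⬝ᵥ (Uᴴ *ᵥ v) = star v ⬝ᵥ v := by
    rw [star_mulVec, conjTranspose_conjTranspose, dotProduct_mulVec, vecMul_vecMul]
    have : U * Uᴴ = 1 := Matrix.mem_unitaryGroup_iff.mp hU
    rw [this, vecMul_one]
  rw [key, key] at h2
  exact_mod_cast h2

def splitEquiv {m s : ℕ} (hsm : s ≤ m) : Fin s ⊕ Fin (m - s) ≃ Fin m :=
  finSumFinEquiv.trans (finCongr (by omega))

lemma splitEquiv_inl {m s : ℕ} (hsm : s ≤ m) (a : Fin s) :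
    (splitEquiv hsm (Sum.inl a)).val = a.val := by
  simp [splitEquiv]

lemma splitEquiv_inr {m s : ℕ} (hsm : s ≤ m) (a : Fin (m - s)) :
    (splitEquiv hsm (Sum.inr a)).val = s + a.val := by
  simp [splitEquiv]

lemma rot_top {m n s : ℕ} (hsm : s ≤ m) (R : Matrix (Fin m) (Fin n) ℂ)
    (U : Matrix (Fin (m - s)) (Fin (m - s)) ℂ) (p : Fin m) (hp : p.val < s) (j : Fin n) :
    ((blkdiag hsm U)ᴴ * R) p j = R p j := by
  simp [Matrix.mul_apply, blkdiag, hp]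

lemma rot_bot {m n s : ℕ} (hsm : s ≤ m) (R : Matrix (Fin m) (Fin n) ℂ)
    (U : Matrix (Fin (m - s)) (Fin (m - s)) ℂ) (b : Fin (m - s)) (j : Fin n) :
    ((blkdiag hsm U)ᴴ * R) (splitEquiv hsm (Sum.inr b)) j
      = (Uᴴ *ᵥ fun c => R (splitEquiv hsm (Sum.inr c)) j) b := by
  rw [Matrix.mul_apply, ← (splitEquiv hsm).sum_comp, Fintype.sum_sum_type]
  simp [blkdiag, splitEquiv_inl, splitEquiv_inr, mulVec, dotProduct]

lemma tailNorm_rot {m n s : ℕ} (hsm : s ≤ m) (R : Matrix (Fin m) (Fin n) ℂ)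
    (U : Matrix (Fin (m - s)) (Fin (m - s)) ℂ)
    (hU : U ∈ Matrix.unitaryGroup (Fin (m - s)) ℂ) (i : ℕ) (hi : i < s) (j : Fin n) :
    tailNorm ((blkdiag hsm U)ᴴ * R) i j = tailNorm R i j := by
  unfold tailNorm
  congr 1
  rw [← (splitEquiv hsm).sum_comp, ← (splitEquiv hsm).sum_comp, Fintype.sum_sum_type,
    Fintype.sum_sum_type]
  congr 1
  · refine Finset.sum_congr rfl fun a _ => ?_
    rw [rot_top hsm R U _ (by rw [splitEquiv_inl]; exact a.isLt)]
  · have h : ∀ b : Fin (m - s), i ≤ (splitEquiv hsm (Sum.inr b)).val := by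
      intro b; rw [splitEquiv_inr]; omega
    simp only [h, if_true, rot_bot]
    exact unitary_sum_norm U hU _

/-- If `R₀` is in GB(s) form, `U` is unitary, `Q̂ = blkdiag(I_s, U)`, and `P` is a
permutation matrix whose underlying permutation fixes every index `j ≤ s`, then `Q̂ᴴ R₀ P` is in
GB(s) form. -/
theorem gb_preserved_by_trailing_rotation_and_permutation {m n s : ℕ} (hsm : s ≤ m)
    (R₀ : Matrix (Fin m) (Fin n) ℂ) (hGB : IsGB s R₀)
    (U : Matrix (Fin (m - s)) (Fin (m - s)) ℂ)
    (hU : U ∈ Matrix.unitaryGroup (Fin (m - s)) ℂ)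
    (σ : Equiv.Perm (Fin n)) (hfix : ∀ j : Fin n, j.val < s → σ j = j) :
    IsGB s ((blkdiag hsm U)ᴴ * R₀ * σ.permMatrix ℂ) := by
  have hs : ∀ j : Fin n, j.val < s → σ.symm j = j := by
    intro j hj
    rw [Equiv.symm_apply_eq, hfix j hj]
  have hA : ∀ p j, ((blkdiag hsm U)ᴴ * R₀ * σ.permMatrix ℂ) p j
      = ((blkdiag hsm U)ᴴ * R₀) p (σ.symm j) := by
    intro p j
    rw [Equiv.Perm.permMatrix, PEquiv.mul_toMatrix_toPEquiv]
    rfl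
  have hT : ∀ i, i < s → ∀ j, tailNorm ((blkdiag hsm U)ᴴ * R₀ * σ.permMatrix ℂ) i j
      = tailNorm R₀ i (σ.symm j) := by
    intro i hi j
    rw [← tailNorm_rot hsm R₀ U hU i hi]
    simp only [tailNorm, hA]
  obtain ⟨h1, h2⟩ := hGB
  refine ⟨?_, ?_⟩
  · intro p q hq hqp
    rw [hA, hs q hq]
    obtain ⟨x, rfl⟩ := (splitEquiv hsm).surjective p
    rcases x with a | b
    · rw [rot_top hsm R₀ U _ (by rw [splitEquiv_inl]; exact a.isLt)]
      exact h1 _ _ hq hqp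
    · rw [rot_bot]
      have : (fun c => R₀ (splitEquiv hsm (Sum.inr c)) q) = 0 := by
        funext c
        exact h1 _ _ hq (by rw [splitEquiv_inr]; omega)
      rw [this, mulVec_zero]
      rfl
  · intro i hi him hin
    obtain ⟨⟨j, hj, hx⟩, hub⟩ := h2 i hi him hin
    rw [hA, hs _ hi, rot_top hsm R₀ U _ hi]
    refine ⟨⟨σ j, ?_, ?_⟩, ?_⟩
    · by_contra hlt
      have := hs (σ j) (by omega)
      rw [Equiv.symm_apply_apply] at this
      rw [← this] at hlt
      exact hlt hj
    · rw [hT i hi, Equiv.symm_apply_apply]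
      exact hx
    · rintro x ⟨k, hk, rfl⟩
      rw [hT i hi]
      refine hub ⟨_, ?_, rfl⟩
      by_contra hlt
      have := hfix (σ.symm k) (by omega)
      rw [Equiv.apply_symm_apply] at this
      rw [← this] at hlt
      exact hlt hk
end

section
/- Let V₁ ∈ ℂ^{m×s}, T₁ ∈ ℂ^{s×s}, V̂ ∈ ℂ^{m×c}, T̂ ∈ ℂ^{c×c}, and let V₂ = [V₁ V̂] ∈ ℂ^{m×(s+c)} be the horizontal concatenation. Then (I − V₁T₁V₁*)(I − V̂T̂V̂*) = I − V₂T₂V₂*, where T₂ ∈ ℂ^{(s+c)×(s+c)} is the block matrix with blocks T₂ = [[T₁, −T₁V₁*V̂T̂], [0, T̂]]. -/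
open Matrix

/-- **WY product identity.** For arbitrary `V₁ ∈ ℂ^{m×s}`, `T₁ ∈ ℂ^{s×s}`,
`V̂ ∈ ℂ^{m×c}`, `T̂ ∈ ℂ^{c×c}`, with `V₂ = [V₁ V̂]` the horizontal concatenation,
`(I − V₁T₁V₁ᴴ)(I − V̂T̂V̂ᴴ) = I − V₂T₂V₂ᴴ` where `T₂ = [[T₁, −T₁V₁ᴴV̂T̂], [0, T̂]]`. -/
theorem wy_product_identity {m s c : ℕ}
    (V₁ : Matrix (Fin m) (Fin s) ℂ) (T₁ : Matrix (Fin s) (Fin s) ℂ)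
    (Vh : Matrix (Fin m) (Fin c) ℂ) (Th : Matrix (Fin c) (Fin c) ℂ) :
    (1 - V₁ * T₁ * V₁ᴴ) * (1 - Vh * Th * Vhᴴ) =
      1 - (fromCols V₁ Vh) *
        (fromBlocks T₁ (-(T₁ * V₁ᴴ * Vh * Th)) 0 Th) *
        (fromCols V₁ Vh)ᴴ := by
  rw [conjTranspose_fromCols_eq_fromRows_conjTranspose, fromCols_mul_fromBlocks,
    fromCols_mul_fromRows]
  simp only [Matrix.mul_sub, Matrix.sub_mul, Matrix.add_mul, Matrix.mul_one, Matrix.one_mul,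
    Matrix.mul_neg, Matrix.neg_mul, Matrix.mul_zero, add_zero, Matrix.mul_assoc]
  abel
end

section
/- Let V₁ ∈ ℂ^{m×s}, T₁ ∈ ℂ^{s×s}, V̂ ∈ ℂ^{m×c}, T̂ ∈ ℂ^{c×c}, and suppose the horizontal concatenation V₂ = [V₁ V̂] ∈ ℂ^{m×(s+c)} has linearly independent columns. If T₂ ∈ ℂ^{(s+c)×(s+c)} satisfies I − V₂T₂V₂* = (I − V₁T₁V₁*)(I − V̂T̂V̂*), then T₂ is the block matrix [[T₁, −T₁V₁*V̂T̂], [0, T̂]]. -/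
open Matrix

theorem wy_cancel {m n k : Type*} [Fintype n] (V : Matrix m n ℂ)
    (hV : Function.Injective V.mulVec) {X Y : Matrix n k ℂ} (h : V * X = V * Y) : X = Y := by
  ext i j
  have : X.col j = Y.col j := by
    apply hV
    ext a
    exact congrFun (congrFun h a) j
  exact congrFun this i

/-- **Lemma B.1.** If `V₂ = [V₁ V̂]` has linearly independent columns (the map
`x ↦ V₂ x` is injective) and `T₂` satisfies `I − V₂T₂V₂ᴴ = (I − V₁T₁V₁ᴴ)(I − V̂T̂V̂ᴴ)`, then
`T₂` is the block matrix `[[T₁, −T₁V₁ᴴV̂T̂], [0, T̂]]`. -/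
theorem wy_update_unique {m s c : ℕ}
    (V₁ : Matrix (Fin m) (Fin s) ℂ) (T₁ : Matrix (Fin s) (Fin s) ℂ)
    (Vh : Matrix (Fin m) (Fin c) ℂ) (Th : Matrix (Fin c) (Fin c) ℂ)
    (hInj : Function.Injective (fromCols V₁ Vh).mulVec)
    (T₂ : Matrix (Fin s ⊕ Fin c) (Fin s ⊕ Fin c) ℂ)
    (hT₂ : 1 - (fromCols V₁ Vh) * T₂ * (fromCols V₁ Vh)ᴴ =
      (1 - V₁ * T₁ * V₁ᴴ) * (1 - Vh * Th * Vhᴴ)) :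
    T₂ = fromBlocks T₁ (-(T₁ * V₁ᴴ * Vh * Th)) 0 Th := by
  have key : fromCols V₁ Vh * fromBlocks T₁ (-(T₁ * V₁ᴴ * Vh * Th)) 0 Th * (fromCols V₁ Vh)ᴴ
      = V₁ * T₁ * V₁ᴴ + Vh * Th * Vhᴴ - V₁ * T₁ * V₁ᴴ * (Vh * Th * Vhᴴ) := by
    rw [fromCols_mul_fromBlocks, conjTranspose_fromCols_eq_fromRows_conjTranspose,
      fromCols_mul_fromRows]
    simp only [Matrix.mul_zero, add_zero, Matrix.mul_neg, Matrix.add_mul, Matrix.neg_mul,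
      Matrix.mul_assoc]
    abel
  have h1 : fromCols V₁ Vh * T₂ * (fromCols V₁ Vh)ᴴ =
      fromCols V₁ Vh * fromBlocks T₁ (-(T₁ * V₁ᴴ * Vh * Th)) 0 Th * (fromCols V₁ Vh)ᴴ := by
    rw [key, ← sub_right_inj (a := 1), hT₂]
    noncomm_ring
  rw [Matrix.mul_assoc, Matrix.mul_assoc] at h1
  have h2 := congrArg conjTranspose (wy_cancel _ hInj h1)
  rw [conjTranspose_mul, conjTranspose_mul, conjTranspose_conjTranspose] at h2
  exact conjTranspose_injective (wy_cancel _ hInj h2)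
end

section
/- Let v₁, …, v_k ∈ ℂ^m and τ₁, …, τ_k ∈ ℂ, and let V = [v₁ ⋯ v_k] ∈ ℂ^{m×k}. Then there exists an upper-triangular matrix T ∈ ℂ^{k×k} such that ∏_{i=1}^{k} (I − τᵢ vᵢ vᵢ*) = I − V T V*, where the product is ordered left to right (i.e., (I − τ₁v₁v₁*)(I − τ₂v₂v₂*)⋯(I − τ_k v_k v_k*)). -/
open Matrix

theorem wy_expand {m k : ℕ} (v : Fin k → Fin m → ℂ) (T : Matrix (Fin k) (Fin k) ℂ) :
    (Matrix.of fun (p : Fin m) (i : Fin k) => v i p) * T *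
          (Matrix.of fun (p : Fin m) (i : Fin k) => v i p)ᴴ =
      ∑ j, ∑ i, T i j • Matrix.vecMulVec (v i) (star (v j)) := by
  ext p q
  simp only [Matrix.mul_apply, Matrix.sum_apply, Matrix.smul_apply, Matrix.vecMulVec_apply,
    Matrix.conjTranspose_apply, Matrix.of_apply, Pi.star_apply, Finset.sum_mul, smul_eq_mul]
  refine Finset.sum_congr rfl fun j _ => Finset.sum_congr rfl fun i _ => ?_
  ring

/-- **Schreiber–Van Loan, existence of a compact WY form.** For vectors
`v₁, …, v_k ∈ ℂ^m` and scalars `τ₁, …, τ_k ∈ ℂ`, with `V = [v₁ ⋯ v_k]`, there is an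
upper-triangular `T ∈ ℂ^{k×k}` such that the left-to-right ordered product
`∏_{i=1}^k (I − τᵢ vᵢ vᵢᴴ)` equals `I − V T Vᴴ`. -/
theorem compact_wy_exists {m k : ℕ} (v : Fin k → Fin m → ℂ) (τ : Fin k → ℂ) :
    ∃ T : Matrix (Fin k) (Fin k) ℂ,
      (∀ i j : Fin k, j < i → T i j = 0) ∧
      ((List.finRange k).map (fun i =>
          (1 : Matrix (Fin m) (Fin m) ℂ) - τ i • Matrix.vecMulVec (v i) (star (v i)))).prod =
        1 - (Matrix.of fun (p : Fin m) (i : Fin k) => v i p) * T *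
          (Matrix.of fun (p : Fin m) (i : Fin k) => v i p)ᴴ := by
  induction k with
  | zero => exact ⟨0, fun i => i.elim0, by simp⟩
  | succ k ih =>
    obtain ⟨T, hT, hp⟩ := ih (fun i => v i.succ) (fun i => τ i.succ)
    refine ⟨Matrix.of (Fin.cons (Fin.cons (τ 0)
      (fun j => - ∑ i, τ 0 * T i j * (star (v 0) ⬝ᵥ v i.succ)))
      (fun i => Fin.cons 0 (fun j => T i j))), ?_, ?_⟩
    · intro i j hij
      induction i using Fin.cases with
      | zero => exact absurd hij (by simp)
      | succ i =>
        induction j using Fin.cases with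
        | zero => simp
        | succ j => simpa using hT i j (by simpa using hij)
    · rw [wy_expand] at hp ⊢
      rw [List.finRange_succ, List.map_cons, List.prod_cons, List.map_map]
      have hp' := hp
      simp only [Function.comp_def]
      rw [hp']
      simp only [Fin.sum_univ_succ, Matrix.of_apply, Fin.cons_zero, Fin.cons_succ, zero_smul,
        Finset.sum_const_zero, add_zero, Finset.sum_add_distrib, sub_mul, mul_sub, one_mul,
        mul_one, Finset.mul_sum, Matrix.smul_mul, Matrix.mul_smul, Matrix.vecMulVec_mul_vecMulVec,
        neg_smul, Finset.sum_neg_distrib, Finset.sum_smul, smul_smul, Matrix.vecMulVec_smul]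
      have e : ∀ i j, T i j * (τ 0 * (star (v 0) ⬝ᵥ v i.succ)) = τ 0 * T i j * (star (v 0) ⬝ᵥ v i.succ) := by
        intro i j; ring
      simp only [e, Finset.sum_sub_distrib]
      abel
end

section
/- Let A ∈ ℂ^{m×n}, let Q ∈ ℂ^{m×m} be unitary, and set R = Q*A. Fix 1 ≤ i ≤ m, and suppose the first i−1 columns of R are upper-triangular with nonzero diagonal entries, i.e., R(p,q) = 0 for all q < i and p > q, and R(r,r) ≠ 0 for all r < i. Then for every 1 ≤ j ≤ n, the Euclidean norm of the orthogonal projection of A(:,j) onto the orthogonal complement of span{A(:,1), …, A(:,i−1)} equals ‖R(i:m, j)‖₂. -/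
open Matrix

/-- `colE A j` is column `j` of `A`, viewed as a vector in the Euclidean space `ℂ^m`
(with the standard Hermitian inner product). -/
noncomputable def colE {m n : ℕ} (A : Matrix (Fin m) (Fin n) ℂ) (j : Fin n) :
    EuclideanSpace ℂ (Fin m) :=
  WithLp.toLp 2 (fun p => A p j)

theorem aux_orthonormal {m : ℕ} (Q : Matrix (Fin m) (Fin m) ℂ)
    (hQ : Q ∈ Matrix.unitaryGroup (Fin m) ℂ) : Orthonormal ℂ (colE Q) := by
  rw [orthonormal_iff_ite]
  intro a b
  have h : star Q * Q = 1 := (Matrix.mem_unitaryGroup_iff').1 hQ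
  have h2 := congrFun (congrFun h a) b
  rw [Matrix.mul_apply, Matrix.one_apply] at h2
  rw [← h2]
  simp [colE, PiLp.inner_apply, Matrix.star_apply, mul_comm]

theorem aux_expand {m n : ℕ} (A : Matrix (Fin m) (Fin n) ℂ)
    (Q : Matrix (Fin m) (Fin m) ℂ) (hQ : Q ∈ Matrix.unitaryGroup (Fin m) ℂ)
    (R : Matrix (Fin m) (Fin n) ℂ) (hR : R = Qᴴ * A) (q : Fin n) :
    colE A q = ∑ p, R p q • colE Q p := by
  have h : Q * star Q = 1 := (Matrix.mem_unitaryGroup_iff).1 hQ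
  have hA : A = Q * R := by
    rw [hR, ← Matrix.mul_assoc, ← Matrix.star_eq_conjTranspose, h, Matrix.one_mul]
  ext x
  have h2 : A x q = (Q * R) x q := by rw [← hA]
  rw [Matrix.mul_apply] at h2
  simp [colE, h2, mul_comm]

/-- Let `R = Qᴴ A` with `Q` unitary, and suppose the first `i−1` columns of `R`
are upper-triangular with nonzero diagonal entries. Then for every column `j`, the norm of the
orthogonal projection of `A(:,j)` onto the orthogonal complement of
`span{A(:,1), …, A(:,i−1)}` equals `‖R(i:m, j)‖₂`. -/
theorem residual_norm_eq_tailNorm {m n : ℕ} (A : Matrix (Fin m) (Fin n) ℂ)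
    (Q : Matrix (Fin m) (Fin m) ℂ) (hQ : Q ∈ Matrix.unitaryGroup (Fin m) ℂ)
    (R : Matrix (Fin m) (Fin n) ℂ) (hR : R = Qᴴ * A)
    (i : ℕ) (hi1 : 1 ≤ i) (him : i ≤ m) (hin : i - 1 ≤ n)
    (htri : ∀ (p : Fin m) (q : Fin n), q.val + 1 < i → q.val < p.val → R p q = 0)
    (hdiag : ∀ (r : ℕ) (hr : r + 1 < i) (hrn : r < n), R ⟨r, by omega⟩ ⟨r, hrn⟩ ≠ 0) :
    ∀ j : Fin n,
      ‖(Submodule.orthogonalProjectionOnto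
          (Submodule.span ℂ {v : EuclideanSpace ℂ (Fin m) |
              ∃ q : Fin n, q.val + 1 < i ∧ v = colE A q})ᗮ
          (colE A j) : EuclideanSpace ℂ (Fin m))‖ = tailNorm R (i - 1) j := by
  have hO := aux_orthonormal Q hQ
  have hE := aux_expand A Q hQ R hR
  intro j
  set S := Submodule.span ℂ {v : EuclideanSpace ℂ (Fin m) |
              ∃ q : Fin n, q.val + 1 < i ∧ v = colE A q} with hS
  have hmem : ∀ (r : ℕ) (hr : r + 1 < i), colE Q ⟨r, by omega⟩ ∈ S := by
    intro r
    induction r using Nat.strong_induction_on with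
    | _ r ih =>
      intro hr
      have hrn : r < n := by omega
      have hA : colE A ⟨r, hrn⟩ ∈ S := Submodule.subset_span ⟨⟨r, hrn⟩, hr, rfl⟩
      have hd := hdiag r hr hrn
      rw [hE, ← Finset.add_sum_erase _ _ (Finset.mem_univ (⟨r, by omega⟩ : Fin m))] at hA
      have hB : ∑ p ∈ Finset.univ.erase (⟨r, by omega⟩ : Fin m),
          R p ⟨r, hrn⟩ • colE Q p ∈ S := by
        refine Submodule.sum_mem _ fun p hp => ?_
        have hne : p.val ≠ r := fun h => (Finset.mem_erase.1 hp).1 (Fin.ext h)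
        rcases lt_or_gt_of_ne hne with h | h
        · exact S.smul_mem _ (ih p.val h (by omega))
        · rw [htri p ⟨r, hrn⟩ hr h, zero_smul]
          exact S.zero_mem
      have hC := (S.add_mem_iff_left hB).1 hA
      exact (S.smul_mem_iff hd).1 hC
  have hw : (∑ p : Fin m, (if i - 1 ≤ p.val then R p j else 0) • colE Q p) ∈ Sᗮ := by
    rw [Submodule.mem_orthogonal]
    intro u hu
    induction hu using Submodule.span_induction with
    | mem x hx =>
      obtain ⟨q, hq, rfl⟩ := hx
      rw [hE q, hO.inner_sum]
      refine Finset.sum_eq_zero fun p _ => ?_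
      split_ifs with h
      · rw [htri p q hq (by omega)]
        simp
      · simp
    | zero => simp
    | add x y _ _ hx hy => rw [inner_add_left, hx, hy, add_zero]
    | smul a x _ hx => rw [inner_smul_left, hx, mul_zero]
  have hu : (∑ p : Fin m, (if i - 1 ≤ p.val then 0 else R p j) • colE Q p) ∈ S := by
    refine Submodule.sum_mem _ fun p _ => ?_
    split_ifs with h
    · simp
    · exact S.smul_mem _ (hmem p.val (by omega))
  have hsum : colE A j = (∑ p : Fin m, (if i - 1 ≤ p.val then R p j else 0) • colE Q p)
      + ∑ p : Fin m, (if i - 1 ≤ p.val then 0 else R p j) • colE Q p := by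
    rw [hE j, ← Finset.sum_add_distrib]
    refine Finset.sum_congr rfl fun p _ => ?_
    split_ifs <;> simp
  have hproj := Submodule.eq_starProjection_of_mem_orthogonal' hw
    (S.le_orthogonal_orthogonal hu) hsum
  rw [Submodule.starProjection_apply] at hproj
  rw [hproj, tailNorm, @norm_eq_sqrt_re_inner ℂ, hO.inner_sum, map_sum]
  congr 1
  refine Finset.sum_congr rfl fun p _ => ?_
  split_ifs
  · rw [RCLike.conj_mul]
    norm_cast
  · simp
end

section
/- Let R₀ ∈ ℂ^{m×n} be in GB(s) form with s + t ≤ n, and suppose max_{s < j ≤ s+t} ‖R₀((s+1):m, j)‖₂² ≥ max_{s+t < j ≤ n} ‖R₀(:, j)‖₂² =: μ (with μ := 0 if s+t = n). Let C ⊆ {s+1, …, s+t} be a set of b indices that contains some index attaining max_{s < j ≤ s+t} ‖R₀((s+1):m, j)‖₂², let B ∈ ℂ^{(m−s)×b} be the submatrix of R₀ with rows (s+1):m and columns indexed by C, and set δ := max{ ‖R₀((s+1):m, j)‖₂² : j ∈ {s+1,…,s+t} \ C } (with δ := 0 if C = {s+1,…,s+t}). If Ū ∈ ℂ^{(m−s)×(m−s)}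 is unitary, Π_b ∈ ℂ^{b×b} is a permutation matrix, and R̂ = Ū* B Π_b is in GB(1) form, then |R̂(1,1)|² ≥ δ and |R̂(1,1)|² ≥ μ. -/
open Matrix

lemma sum_sq_eq_dot {k : ℕ} (v : Fin k → ℂ) :
    ((∑ p, ‖v p‖ ^ 2 : ℝ) : ℂ) = star v ⬝ᵥ v := by
  simp only [dotProduct, Pi.star_apply, RCLike.star_def]
  push_cast
  refine Finset.sum_congr rfl fun p _ => ?_
  rw [mul_comm, Complex.mul_conj, Complex.normSq_eq_norm_sq]
  push_cast
  rfl

lemma unitary_sum_sq {k : ℕ} (U : Matrix (Fin k) (Fin k) ℂ)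
    (hU : U ∈ Matrix.unitaryGroup (Fin k) ℂ) (v : Fin k → ℂ) :
    ∑ p, ‖(Uᴴ *ᵥ v) p‖ ^ 2 = ∑ p, ‖v p‖ ^ 2 := by
  have h : U * Uᴴ = 1 := Matrix.mem_unitaryGroup_iff.1 hU
  have : ((∑ p, ‖(Uᴴ *ᵥ v) p‖ ^ 2 : ℝ) : ℂ) = ((∑ p, ‖v p‖ ^ 2 : ℝ) : ℂ) := by
    rw [sum_sq_eq_dot, sum_sq_eq_dot, Matrix.star_mulVec, Matrix.conjTranspose_conjTranspose,
      Matrix.dotProduct_mulVec, Matrix.vecMul_vecMul, h, Matrix.vecMul_one]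
  exact_mod_cast this

lemma tail_sq {m n : ℕ} (R : Matrix (Fin m) (Fin n) ℂ) (i : ℕ) (j : Fin n) :
    (tailNorm R i j) ^ 2 = ∑ p : Fin m, if i ≤ p.val then ‖R p j‖ ^ 2 else 0 := by
  unfold tailNorm
  rw [Real.sq_sqrt]
  exact Finset.sum_nonneg fun p _ => by split_ifs <;> positivity

lemma tail_sum {m s : ℕ} (hsm : s < m) (f : Fin m → ℝ) :
    (∑ p : Fin m, if s ≤ p.val then f p else 0) =
      ∑ p : Fin (m - s), f ⟨s + p.val, by have := p.isLt; omega⟩ := by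
  rw [← Finset.sum_filter]
  symm
  refine Finset.sum_bij (fun p _ => ⟨s + p.val, by have := p.isLt; omega⟩) ?_ ?_ ?_ ?_
  · intro p _; simp
  · intro p _ q _ h
    simp only [Fin.mk.injEq] at h
    exact Fin.ext (by omega)
  · intro p hp
    simp only [Finset.mem_filter, Finset.mem_univ, true_and] at hp
    exact ⟨⟨p.val - s, by have := p.isLt; omega⟩, Finset.mem_univ _, Fin.ext (by simp; omega)⟩
  · intro p _; rfl

/-- **the commit set is nonempty.** Let `R₀ ∈ ℂ^{m×n}` be in GB(s) form with
`s + t ≤ n`, and suppose the maximal squared residual norm over the tracked columns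
`{s+1,…,s+t}` — attained at a column `j₀` belonging to the candidate set `C ⊆ {s+1,…,s+t}`
of size `b` — is at least the maximal squared column norm `μ` over the untracked columns
`j > s+t`. Let `B ∈ ℂ^{(m−s)×b}` be the submatrix of `R₀` with rows `(s+1):m` and columns
indexed by `C`. If `Ū` is unitary, `Π_b` a permutation matrix, and `R̂ = Ūᴴ B Π_b` is in GB(1)
form, then `|R̂(1,1)|² ≥ δ` and `|R̂(1,1)|² ≥ μ`, where `δ` is the maximal squared residual norm
over non-candidate tracked columns (`0` if there are none). -/
theorem commit_set_nonempty {m n s t b : ℕ} (hsm : s < m) (hst : s + t ≤ n)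
    (R₀ : Matrix (Fin m) (Fin n) ℂ) (hGB : IsGB s R₀)
    (C : Finset (Fin n)) (hb : C.card = b) (hb0 : 0 < b)
    (hCsub : ∀ j ∈ C, s ≤ j.val ∧ j.val < s + t)
    (j₀ : Fin n) (hj₀C : j₀ ∈ C)
    (hj₀max : ∀ j : Fin n, s ≤ j.val → j.val < s + t →
        (tailNorm R₀ s j) ^ 2 ≤ (tailNorm R₀ s j₀) ^ 2)
    (hμ : ∀ j : Fin n, s + t ≤ j.val →
        (tailNorm R₀ 0 j) ^ 2 ≤ (tailNorm R₀ s j₀) ^ 2)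
    (U : Matrix (Fin (m - s)) (Fin (m - s)) ℂ)
    (hU : U ∈ Matrix.unitaryGroup (Fin (m - s)) ℂ)
    (σb : Equiv.Perm (Fin b))
    (Rh : Matrix (Fin (m - s)) (Fin b) ℂ)
    (hRh : Rh = Uᴴ * (Matrix.of fun (p : Fin (m - s)) (q : Fin b) =>
        R₀ ⟨s + p.val, by have := p.isLt; omega⟩ ((C.orderIsoOfFin hb q : Fin n))) *
      σb.permMatrix ℂ)
    (hGB1 : IsGB 1 Rh) :
    (∀ j : Fin n, s ≤ j.val → j.val < s + t → j ∉ C →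
        (tailNorm R₀ s j) ^ 2 ≤ ‖Rh ⟨0, by omega⟩ ⟨0, hb0⟩‖ ^ 2) ∧
    (∀ j : Fin n, s + t ≤ j.val →
        (tailNorm R₀ 0 j) ^ 2 ≤ ‖Rh ⟨0, by omega⟩ ⟨0, hb0⟩‖ ^ 2) := by
  have key : (tailNorm R₀ s j₀) ^ 2 ≤ ‖Rh ⟨0, by omega⟩ ⟨0, hb0⟩‖ ^ 2 := by
    obtain ⟨q, hq⟩ := (C.orderIsoOfFin hb).surjective ⟨j₀, hj₀C⟩
    have hq2 : C.orderEmbOfFin hb q = j₀ := by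
      rw [← Finset.coe_orderIsoOfFin_apply, hq]
    have hle := (hGB1.2 0 one_pos (by omega) hb0).2 ⟨σb q, Nat.zero_le _, rfl⟩
    have hcol : ∀ p, Rh p (σb q) = (Uᴴ *ᵥ fun p : Fin (m - s) =>
        R₀ ⟨s + p.val, by have := p.isLt; omega⟩ j₀) p := by
      intro p
      rw [hRh, Equiv.Perm.permMatrix, PEquiv.mul_toMatrix_toPEquiv]
      simp [Matrix.mul_apply, Matrix.mulVec, dotProduct, hq2]
    have heq : (tailNorm R₀ s j₀) ^ 2 = (tailNorm Rh 0 (σb q)) ^ 2 := by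
      rw [tail_sq, tail_sq, tail_sum hsm (fun p => ‖R₀ p j₀‖ ^ 2)]
      simp only [Nat.zero_le, if_true, hcol]
      rw [unitary_sum_sq U hU]
    rw [heq]
    exact pow_le_pow_left₀ (Real.sqrt_nonneg _) hle 2
  exact ⟨fun j h1 h2 _ => (hj₀max j h1 h2).trans key, fun j h => (hμ j h).trans key⟩
end

section
/- Let A ∈ ℂ^{m×n}, let Q ∈ ℂ^{m×m} be unitary, let Π ∈ ℂ^{n×n} be a permutation matrix, and suppose R = Q* A Π is in GB(k) form with R(r,r) ≠ 0 for all 1 ≤ r < k. Then for each 1 ≤ i ≤ k, letting P_i denote the orthogonal projection of ℂ^m onto the orthogonal complement of span{(AΠ)(:,1), …, (AΠ)(:,i−1)}, it holds that ‖P_i (AΠ)(:,i)‖₂ = |R(i,i)| and ‖P_i (AΠ)(:,i)‖₂ ≥ ‖P_i (AΠ)(:,j)‖₂ for every i ≤ j ≤ n. -/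
open Matrix

theorem proj_norm_eq_tailNorm {m n : ℕ} (k : ℕ) (hkm : k ≤ m) (hkn : k ≤ n)
    (B : Matrix (Fin m) (Fin n) ℂ)
    (Q : Matrix (Fin m) (Fin m) ℂ) (hQ : Qᴴ * Q = 1)
    (R : Matrix (Fin m) (Fin n) ℂ) (hB : B = Q * R)
    (htri : ∀ (p : Fin m) (q : Fin n), q.val < k → q.val < p.val → R p q = 0)
    (hdiag : ∀ (r : ℕ) (hm : r < m) (hn : r < n), r + 1 < k → R ⟨r, hm⟩ ⟨r, hn⟩ ≠ 0)
    (i : ℕ) (hi1 : 1 ≤ i) (hik : i ≤ k) (j : Fin n) :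
    ‖(Submodule.orthogonalProjectionOnto
          (Submodule.span ℂ {v : EuclideanSpace ℂ (Fin m) |
              ∃ q : Fin n, q.val + 1 < i ∧ v = colE B q})ᗮ
          (colE B j) : EuclideanSpace ℂ (Fin m))‖ = tailNorm R (i - 1) j := by
  have he : Orthonormal ℂ (fun p => colE Q p) := by
    rw [orthonormal_iff_ite]
    intro a b
    have := congrFun (congrFun hQ a) b
    rw [Matrix.mul_apply, Matrix.one_apply] at this
    rw [← this]
    simp [colE, PiLp.inner_apply, mul_comm]
  have hcol : ∀ q, colE B q = ∑ p, R p q • colE Q p := by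
    intro q
    ext x
    simp [colE, hB, Matrix.mul_apply, mul_comm]
  set V := Submodule.span ℂ {v : EuclideanSpace ℂ (Fin m) |
              ∃ q : Fin n, q.val + 1 < i ∧ v = colE B q} with hV
  have hmem : ∀ (N : ℕ) (hN : N < m), N + 1 < i → colE Q ⟨N, hN⟩ ∈ V := by
    intro N
    induction N using Nat.strong_induction_on with
    | _ N ih =>
      intro hN hNi
      have hNn : N < n := by omega
      have h1 : colE B ⟨N, hNn⟩ ∈ V := Submodule.subset_span ⟨⟨N, hNn⟩, hNi, rfl⟩
      rw [hcol, ← Finset.add_sum_erase _ _ (Finset.mem_univ (⟨N, hN⟩ : Fin m))] at h1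
      have h2 : ∑ p ∈ Finset.univ.erase (⟨N, hN⟩ : Fin m), R p ⟨N, hNn⟩ • colE Q p ∈ V := by
        refine Submodule.sum_mem _ fun p hp => ?_
        have hne : p.val ≠ N := fun h => (Finset.ne_of_mem_erase hp) (Fin.ext h)
        rcases lt_or_gt_of_ne hne with h | h
        · exact Submodule.smul_mem _ _ (ih p.val h p.isLt (by omega))
        · rw [htri p ⟨N, hNn⟩ (by simp; omega) h, zero_smul]
          exact Submodule.zero_mem _
      have h3 := (Submodule.add_mem_iff_left V h2).1 h1
      exact (Submodule.smul_mem_iff V (hdiag N hN hNn (by omega))).1 h3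
  set c : Fin m → ℂ := fun p => if i - 1 ≤ p.val then R p j else 0 with hc
  have hproj : Vᗮ.starProjection (colE B j) = ∑ p, c p • colE Q p := by
    apply Submodule.eq_starProjection_of_mem_orthogonal
    · have : V ≤ (Submodule.span ℂ {∑ p, c p • colE Q p})ᗮ := by
        rw [hV, Submodule.span_le]
        rintro v ⟨q, hq, rfl⟩
        rw [SetLike.mem_coe, Submodule.mem_orthogonal_singleton_iff_inner_left, hcol,
          he.inner_sum]
        refine Finset.sum_eq_zero fun p _ => ?_
        by_cases h : i - 1 ≤ p.val
        · rw [htri p q (by omega) (by omega)]; simp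
        · simp only [hc, h, if_false, mul_zero]
      rw [Submodule.mem_orthogonal]
      intro u hu
      exact Submodule.mem_orthogonal_singleton_iff_inner_left.1 (this hu)
    · apply Submodule.le_orthogonal_orthogonal
      rw [hcol, ← Finset.sum_sub_distrib]
      refine Submodule.sum_mem _ fun p _ => ?_
      by_cases h : i - 1 ≤ p.val
      · simp only [hc, h, if_true, sub_self, Submodule.zero_mem]
      · simp only [hc, h, if_false, zero_smul, sub_zero]
        exact Submodule.smul_mem _ _ (hmem p.val p.isLt (by omega))
  rw [Submodule.coe_orthogonalProjectionOnto_apply, hproj, tailNorm]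
  rw [@norm_eq_sqrt_re_inner ℂ, he.inner_sum]
  congr 1
  rw [map_sum]
  refine Finset.sum_congr rfl fun p _ => ?_
  by_cases h : i - 1 ≤ p.val
  · simp only [hc, h, if_true]
    rw [RCLike.conj_mul]
    norm_cast
  · simp only [hc, h, if_false, map_zero, mul_zero]

/-- **greedy optimality of GB(k) form.** Suppose `R = Qᴴ A Π` is in GB(k) form
(`Q` unitary, `Π` the permutation matrix of `σ`) with `R(r,r) ≠ 0` for `1 ≤ r < k`. Then for each
`1 ≤ i ≤ k`, letting `P_i` be the orthogonal projection onto the orthogonal complement of the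
span of the first `i−1` columns of `AΠ`, we have `‖P_i (AΠ)(:,i)‖₂ = |R(i,i)|` and
`‖P_i (AΠ)(:,i)‖₂ ≥ ‖P_i (AΠ)(:,j)‖₂` for every `i ≤ j ≤ n`. -/
theorem gb_greedy_optimality {m n : ℕ} (k : ℕ) (hkm : k ≤ m) (hkn : k ≤ n)
    (A : Matrix (Fin m) (Fin n) ℂ)
    (Q : Matrix (Fin m) (Fin m) ℂ) (hQ : Q ∈ Matrix.unitaryGroup (Fin m) ℂ)
    (σ : Equiv.Perm (Fin n))
    (R : Matrix (Fin m) (Fin n) ℂ) (hR : R = Qᴴ * A * σ.permMatrix ℂ)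
    (hGB : IsGB k R)
    (hdiag : ∀ (r : ℕ) (hr : r + 1 < k), R ⟨r, by omega⟩ ⟨r, by omega⟩ ≠ 0) :
    ∀ (i : ℕ) (hi1 : 1 ≤ i) (hik : i ≤ k),
      ‖(Submodule.orthogonalProjectionOnto
          (Submodule.span ℂ {v : EuclideanSpace ℂ (Fin m) |
              ∃ q : Fin n, q.val + 1 < i ∧ v = colE (A * σ.permMatrix ℂ) q})ᗮ
          (colE (A * σ.permMatrix ℂ) ⟨i - 1, by omega⟩) : EuclideanSpace ℂ (Fin m))‖ =
        ‖R ⟨i - 1, by omega⟩ ⟨i - 1, by omega⟩‖ ∧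
      ∀ j : Fin n, i - 1 ≤ j.val →
        ‖(Submodule.orthogonalProjectionOnto
            (Submodule.span ℂ {v : EuclideanSpace ℂ (Fin m) |
                ∃ q : Fin n, q.val + 1 < i ∧ v = colE (A * σ.permMatrix ℂ) q})ᗮ
            (colE (A * σ.permMatrix ℂ) j) : EuclideanSpace ℂ (Fin m))‖ ≤
          ‖(Submodule.orthogonalProjectionOnto
              (Submodule.span ℂ {v : EuclideanSpace ℂ (Fin m) |
                  ∃ q : Fin n, q.val + 1 < i ∧ v = colE (A * σ.permMatrix ℂ) q})ᗮ
              (colE (A * σ.permMatrix ℂ) ⟨i - 1, by omega⟩) : EuclideanSpace ℂ (Fin m))‖ := by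
  intro i hi1 hik
  have hQ1 : Qᴴ * Q = 1 := Matrix.mem_unitaryGroup_iff'.1 hQ
  have hQ2 : Q * Qᴴ = 1 := Matrix.mem_unitaryGroup_iff.1 hQ
  have hB : A * σ.permMatrix ℂ = Q * R := by
    rw [hR, Matrix.mul_assoc Qᴴ, ← Matrix.mul_assoc Q, hQ2, Matrix.one_mul]
  have key := proj_norm_eq_tailNorm k hkm hkn _ Q hQ1 R hB hGB.1 (fun r _ _ hr => hdiag r hr) i hi1 hik
  have hgr := hGB.2 (i - 1) (by omega) (by omega) (by omega)
  have hd : tailNorm R (i - 1) ⟨i - 1, by omega⟩ = ‖R ⟨i - 1, by omega⟩ ⟨i - 1, by omega⟩‖ := by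
    rw [tailNorm, Finset.sum_eq_single (⟨i - 1, by omega⟩ : Fin m)]
    · simp
    · intro p _ hp
      split_ifs with h
      · have hne : p.val ≠ i - 1 := fun h => hp (Fin.ext h)
        rw [hGB.1 p ⟨i - 1, by omega⟩ (by simp; omega) (by simp; omega)]
        simp
      · rfl
    · simp
  refine ⟨(key _).trans hd, fun j hj => ?_⟩
  rw [key, key, hd]
  exact hgr.2 ⟨j, hj, rfl⟩
end
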